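/- Let q_1, q_2 > 0 and P > 0. For all P_1, P_2 > 0 with P_1 + P_2 = 2P, the harmonic-mean end-to-end SNR satisfies (q_1² P_1 · q_2² P_2)/(q_1² P_1 + q_2² P_2) ≤ 2P · q_1² q_2² / (q_1 + q_2)², and equality holds if and only if P_1 = 2P q_2/(q_1 + q_2) and P_2 = 2P q_1/(q_1 + q_2). -/

import Mathlib

/-- For `q₁, q₂, P > 0` and any `P₁, P₂ > 0` with `P₁ + P₂ = 2P`, the
harmonic-mean end-to-end SNR satisfies
`(q₁²P₁·q₂²P₂)/(q₁²P₁+q₂²P₂) ≤ 2P·q₁²q₂²/(q₁+q₂)²`, with equality iff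
`P₁ = 2Pq₂/(q₁+q₂)` and `P₂ = 2Pq₁/(q₁+q₂)`. -/
theorem stmt_6 (q₁ q₂ P : ℝ) (hq1 : 0 < q₁) (hq2 : 0 < q₂) (hP : 0 < P) :
    ∀ P₁ P₂ : ℝ, 0 < P₁ → 0 < P₂ → P₁ + P₂ = 2 * P →
      (q₁ ^ 2 * P₁ * (q₂ ^ 2 * P₂)) / (q₁ ^ 2 * P₁ + q₂ ^ 2 * P₂) ≤
          2 * P * (q₁ ^ 2 * q₂ ^ 2) / (q₁ + q₂) ^ 2 ∧
        ((q₁ ^ 2 * P₁ * (q₂ ^ 2 * P₂)) / (q₁ ^ 2 * P₁ + q₂ ^ 2 * P₂) =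
            2 * P * (q₁ ^ 2 * q₂ ^ 2) / (q₁ + q₂) ^ 2 ↔
          P₁ = 2 * P * q₂ / (q₁ + q₂) ∧ P₂ = 2 * P * q₁ / (q₁ + q₂)) := by
  intro P₁ P₂ h1 h2 h
  have hD : 0 < q₁ ^ 2 * P₁ + q₂ ^ 2 * P₂ := by positivity
  have hS : 0 < q₁ + q₂ := by positivity
  have key : 2 * P * (q₁ ^ 2 * q₂ ^ 2) / (q₁ + q₂) ^ 2 -
      (q₁ ^ 2 * P₁ * (q₂ ^ 2 * P₂)) / (q₁ ^ 2 * P₁ + q₂ ^ 2 * P₂) =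
      (q₁ * q₂ * (q₁ * P₁ - q₂ * P₂)) ^ 2 /
        ((q₁ + q₂) ^ 2 * (q₁ ^ 2 * P₁ + q₂ ^ 2 * P₂)) := by
    rw [← h, div_sub_div _ _ (by positivity) hD.ne']
    congr 1
    ring
  constructor
  · rw [← sub_nonneg, key]
    positivity
  · rw [eq_comm, ← sub_eq_zero, key, div_eq_zero_iff,
      or_iff_left (by positivity), eq_div_iff hS.ne', eq_div_iff hS.ne', ← h]
    constructor
    · intro h0
      have h3 := (mul_eq_zero.mp (pow_eq_zero_iff (two_ne_zero)|>.mp h0)).resolve_left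
        (by positivity)
      constructor <;> linarith
    · rintro ⟨h3, -⟩
      have h4 : q₁ * P₁ - q₂ * P₂ = 0 := by linarith
      rw [h4]
      ring
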